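/- Let G be a connected finite simple graph on n ≥ 2 vertices with adjacency matrix A, minimum degree δ ≥ 1, and maximum degree Δ, and suppose Δ/δ ≤ 8/7. Let S be the diagonal matrix with S_ii = Δ − deg(v_i) (weighted self-loops). Then A + S has all row sums equal to Δ (i.e., the resulting multigraph is Δ-regular), and λ₂ of the normalized version of A + S is at most λ₂ of the normalized version of A, plus 6/7. -/

import Mathlib

/-!
Write `M` for the normalized version of `A` and `N` for that of `A + S`, let `Δ` be the maximum
degree and `T = diag (√(deg vᵢ / Δ))`. Since `A + S` has constant row sums `Δ`,
`N = T M T + E` with `E = diag (1 - deg vᵢ / Δ)`. Here `‖T‖ ≤ 1`, and `Δ / δ ≤ 8 / 7` gives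
`‖E‖ ≤ 1 / 8`, so the minimax principle for the second singular value yields
`λ₂(N) ≤ λ₂(M) + 1 / 8`, which is stronger than the claim.

The minimax principle enters through two halves, for a symmetric matrix. There is a vector `u`
(an eigenvector whose eigenvalue has largest absolute value) such that the matrix stretches every
vector orthogonal to `u` by at most `λ₂` (`exists_norm_le_lambda2_mul`). In the other direction, for
every `w` there is a nonzero vector orthogonal to `w`, in the span of two top eigenvectors, that the
matrix stretches by at least `λ₂` (`exists_lambda2_mul_le_norm`). Applying the second half to `N`
with `w = T u` and the first one to `M` at `T x` gives the comparison `lambda2_le_add`.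
-/

open scoped Classical in
/-- `lambda2 M` is the second largest among the absolute values of the eigenvalues of the
real symmetric matrix `M`, counted with multiplicity (and `0` if `M` is not symmetric). -/
noncomputable def lambda2 {n : ℕ} (M : Matrix (Fin n) (Fin n) ℝ) : ℝ :=
  if h : M.IsHermitian then
    ((List.ofFn fun i => |h.eigenvalues i|).insertionSort (· ≥ ·)).getD 1 0
  else 0

/-- The normalized version `D⁻¹ᐟ² B D⁻¹ᐟ²` of a matrix `B`, where `D` is the diagonal
matrix of row sums of `B`. -/
noncomputable def normalized {n : ℕ} (B : Matrix (Fin n) (Fin n) ℝ) :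
    Matrix (Fin n) (Fin n) ℝ :=
  Matrix.diagonal (fun i => (∑ j, B i j) ^ (-(1 : ℝ) / 2)) * B *
    Matrix.diagonal (fun i => (∑ j, B i j) ^ (-(1 : ℝ) / 2))

/-- The largest and second largest entries of a tuple sit at two distinct indices `i₀`, `i₁`. -/
theorem exists_index_second_largest {n : ℕ} (hn : 2 ≤ n) (f : Fin n → ℝ)
    [DecidableRel ((· ≥ ·) : ℝ → ℝ → Prop)] :
    ∃ i₀ i₁ : Fin n, i₀ ≠ i₁ ∧
      ((List.ofFn f).insertionSort (· ≥ ·)).getD 1 0 = f i₁ ∧ f i₁ ≤ f i₀ ∧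
      ∀ i, i ≠ i₀ → f i ≤ f i₁ := by
  -- a permutation that puts `f` in decreasing order
  set σ := Tuple.sort (fun i => -f i) with hσ
  have hanti : Antitone (f ∘ σ) := by
    intro i j hij
    have := Tuple.monotone_sort (fun i => -f i) hij
    simp only [Function.comp_apply, ← hσ] at this ⊢
    linarith
  have heq : (List.ofFn f).insertionSort (· ≥ ·) = List.ofFn (f ∘ σ) := by
    refine List.Perm.eq_of_pairwise' (r := (· ≥ ·)) ?_ ?_ ?_
    · exact List.pairwise_insertionSort _ _
    · exact hanti.sortedGE_ofFn.pairwise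
    · exact (List.perm_insertionSort _ _).trans (σ.ofFn_comp_perm f).symm
  refine ⟨σ ⟨0, by omega⟩, σ ⟨1, by omega⟩, ?_, ?_, ?_, ?_⟩
  · intro h
    simpa using σ.injective h
  · rw [heq, List.getD_eq_getElem _ _ (by simp; omega)]
    simp
  · exact hanti (by simp [Fin.le_def])
  · intro i hi
    have h : σ (σ.symm i) = i := σ.apply_symm_apply i
    have hne : (σ.symm i).val ≠ 0 := by
      intro h0
      apply hi
      rw [← h]
      congr 1
      exact Fin.ext h0
    have := @hanti ⟨1, by omega⟩ (σ.symm i) (by rw [Fin.le_def]; simp; omega)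
    simpa using this

theorem exists_index_lambda2 {n : ℕ} (hn : 2 ≤ n) {M : Matrix (Fin n) (Fin n) ℝ}
    (hM : M.IsHermitian) :
    ∃ i₀ i₁ : Fin n, i₀ ≠ i₁ ∧ lambda2 M = |hM.eigenvalues i₁| ∧
      |hM.eigenvalues i₁| ≤ |hM.eigenvalues i₀| ∧
      ∀ i, i ≠ i₀ → |hM.eigenvalues i| ≤ |hM.eigenvalues i₁| := by
  classical
  rw [lambda2, dif_pos hM]
  exact exists_index_second_largest hn fun i => |hM.eigenvalues i|

open Matrix in
theorem inner_eigenvectorBasis_apply {n : ℕ} {M : Matrix (Fin n) (Fin n) ℝ}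
    (hM : M.IsHermitian) (i : Fin n) (x : EuclideanSpace ℝ (Fin n)) :
    inner ℝ (hM.eigenvectorBasis i) (toEuclideanLin M x) =
      hM.eigenvalues i * inner ℝ (hM.eigenvectorBasis i) x := by
  have h : toEuclideanLin M (hM.eigenvectorBasis i) =
      hM.eigenvalues i • hM.eigenvectorBasis i := by
    rw [toLpLin_apply, hM.mulVec_eigenvectorBasis]
    rfl
  rw [← (isSymmetric_toEuclideanLin_iff.mpr hM) _ x, h, real_inner_smul_left]

open Matrix in
theorem norm_sq_apply_eq_sum {n : ℕ} {M : Matrix (Fin n) (Fin n) ℝ}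
    (hM : M.IsHermitian) (x : EuclideanSpace ℝ (Fin n)) :
    ‖toEuclideanLin M x‖ ^ 2 =
      ∑ i, |hM.eigenvalues i| ^ 2 * (inner ℝ (hM.eigenvectorBasis i) x) ^ 2 := by
  rw [← hM.eigenvectorBasis.sum_sq_norm_inner_right]
  refine Finset.sum_congr rfl fun i _ => ?_
  rw [inner_eigenvectorBasis_apply, Real.norm_eq_abs, abs_mul, mul_pow, sq_abs (inner ℝ _ _)]

theorem mul_norm_sq_eq_sum {n : ℕ} {M : Matrix (Fin n) (Fin n) ℝ}
    (hM : M.IsHermitian) (c : ℝ) (x : EuclideanSpace ℝ (Fin n)) :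
    (c * ‖x‖) ^ 2 = ∑ i, c ^ 2 * (inner ℝ (hM.eigenvectorBasis i) x) ^ 2 := by
  rw [mul_pow, ← hM.eigenvectorBasis.sum_sq_norm_inner_right, Finset.mul_sum]
  simp only [Real.norm_eq_abs, sq_abs]

theorem lambda2_nonneg {n : ℕ} (hn : 2 ≤ n) {M : Matrix (Fin n) (Fin n) ℝ}
    (hM : M.IsHermitian) : 0 ≤ lambda2 M := by
  obtain ⟨i₀, i₁, -, h, -⟩ := exists_index_lambda2 hn hM
  exact h ▸ abs_nonneg _

open Matrix in
/-- Upper half of the minimax principle for `λ₂`. -/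
theorem exists_norm_le_lambda2_mul {n : ℕ} (hn : 2 ≤ n) {M : Matrix (Fin n) (Fin n) ℝ}
    (hM : M.IsHermitian) :
    ∃ u : EuclideanSpace ℝ (Fin n), ∀ x, inner ℝ u x = 0 →
      ‖toEuclideanLin M x‖ ≤ lambda2 M * ‖x‖ := by
  have hnonneg := lambda2_nonneg hn hM
  obtain ⟨i₀, i₁, -, h, -, hle⟩ := exists_index_lambda2 hn hM
  refine ⟨hM.eigenvectorBasis i₀, fun x hx => ?_⟩
  refine le_of_pow_le_pow_left₀ two_ne_zero (mul_nonneg hnonneg (norm_nonneg x)) ?_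
  rw [norm_sq_apply_eq_sum hM, mul_norm_sq_eq_sum hM]
  refine Finset.sum_le_sum fun i _ => ?_
  by_cases hi : i = i₀
  · simp [hi, hx]
  · rw [h]
    have := hle i hi
    gcongr

open Matrix in
/-- Lower half of the minimax principle for `λ₂`. -/
theorem exists_lambda2_mul_le_norm {n : ℕ} (hn : 2 ≤ n) {M : Matrix (Fin n) (Fin n) ℝ}
    (hM : M.IsHermitian) (w : EuclideanSpace ℝ (Fin n)) :
    ∃ x : EuclideanSpace ℝ (Fin n), x ≠ 0 ∧ inner ℝ w x = 0 ∧
      lambda2 M * ‖x‖ ≤ ‖toEuclideanLin M x‖ := by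
  obtain ⟨i₀, i₁, hne, h, hle, -⟩ := exists_index_lambda2 hn hM
  set b := hM.eigenvectorBasis with hb
  -- the span of `b i₀` and `b i₁` meets the hyperplane orthogonal to `w`
  obtain ⟨p, q, hpq, horth⟩ : ∃ p q : ℝ, (p ≠ 0 ∨ q ≠ 0) ∧
      p * inner ℝ w (b i₀) + q * inner ℝ w (b i₁) = 0 := by
    by_cases h1 : inner ℝ w (b i₁) = 0
    · exact ⟨0, 1, by simp, by simp [h1]⟩
    · exact ⟨inner ℝ w (b i₁), -inner ℝ w (b i₀), Or.inl h1, by ring⟩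
  have hcoord : ∀ i, inner ℝ (b i) (p • b i₀ + q • b i₁) =
      p * (if i = i₀ then 1 else 0) + q * (if i = i₁ then 1 else 0) := by
    intro i
    simp only [inner_add_right, real_inner_smul_right, orthonormal_iff_ite.mp b.orthonormal]
  refine ⟨p • b i₀ + q • b i₁, ?_, ?_, ?_⟩
  · intro h0
    have e0 := hcoord i₀
    have e1 := hcoord i₁
    simp only [h0, inner_zero_right, if_true, if_neg hne, if_neg hne.symm] at e0 e1
    rcases hpq with hp | hq
    · exact hp (by linarith)
    · exact hq (by linarith)
  · simpa only [inner_add_right, real_inner_smul_right] using horth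
  · refine le_of_pow_le_pow_left₀ two_ne_zero (norm_nonneg _) ?_
    rw [norm_sq_apply_eq_sum hM, mul_norm_sq_eq_sum hM]
    refine Finset.sum_le_sum fun i _ => ?_
    rw [h]
    by_cases hi₀ : i = i₀
    · subst hi₀
      gcongr
    · by_cases hi₁ : i = i₁
      · subst hi₁
        gcongr
      · rw [hcoord]
        simp [hi₀, hi₁]

open Matrix in
theorem norm_diagonal_apply_le {n : ℕ} {t : Fin n → ℝ} {c : ℝ} (hc : 0 ≤ c)
    (ht : ∀ i, |t i| ≤ c) (x : EuclideanSpace ℝ (Fin n)) :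
    ‖toEuclideanLin (diagonal t) x‖ ≤ c * ‖x‖ := by
  refine le_of_pow_le_pow_left₀ two_ne_zero (by positivity) ?_
  rw [mul_pow, EuclideanSpace.norm_sq_eq, EuclideanSpace.norm_sq_eq, Finset.mul_sum]
  refine Finset.sum_le_sum fun i _ => ?_
  have := ht i
  rw [toLpLin_apply]
  simp only [mulVec_diagonal, norm_mul, mul_pow, Real.norm_eq_abs]
  gcongr

open Matrix in
/-- Diagonal compression by a contraction does not increase `λ₂`, and a diagonal perturbation of
operator norm at most `c` increases it by at most `c`. -/
theorem lambda2_le_add {n : ℕ} (hn : 2 ≤ n) {M N : Matrix (Fin n) (Fin n) ℝ}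
    (hM : M.IsHermitian) (hN : N.IsHermitian) {t e : Fin n → ℝ} {c : ℝ} (hc : 0 ≤ c)
    (ht : ∀ i, |t i| ≤ 1) (he : ∀ i, |e i| ≤ c)
    (hNM : N = diagonal t * M * diagonal t + diagonal e) :
    lambda2 N ≤ lambda2 M + c := by
  obtain ⟨u, hu⟩ := exists_norm_le_lambda2_mul hn hM
  obtain ⟨x, hx0, hwx, hx⟩ := exists_lambda2_mul_le_norm hn hN (toEuclideanLin (diagonal t) u)
  have hT : (diagonal t).IsHermitian := isHermitian_diagonal t
  rw [(isSymmetric_toEuclideanLin_iff.mpr hT) u x] at hwx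
  have hsplit : toEuclideanLin N x =
      toEuclideanLin (diagonal t) (toEuclideanLin M (toEuclideanLin (diagonal t) x)) +
        toEuclideanLin (diagonal e) x := by
    rw [hNM]
    simp only [toLpLin_apply, add_mulVec, mulVec_mulVec, WithLp.toLp_add, Matrix.mul_assoc]
  have hpos : 0 < ‖x‖ := norm_pos_iff.mpr hx0
  have hnonneg := lambda2_nonneg hn hM
  refine le_of_mul_le_mul_right ?_ hpos
  calc lambda2 N * ‖x‖ ≤ ‖toEuclideanLin N x‖ := hx
    _ ≤ 1 * ‖toEuclideanLin M (toEuclideanLin (diagonal t) x)‖ + c * ‖x‖ := by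
        rw [hsplit]
        exact (norm_add_le _ _).trans
          (add_le_add (norm_diagonal_apply_le zero_le_one ht _) (norm_diagonal_apply_le hc he _))
    _ ≤ 1 * (lambda2 M * (1 * ‖x‖)) + c * ‖x‖ := by
        gcongr
        refine (hu _ hwx).trans ?_
        gcongr
        exact norm_diagonal_apply_le zero_le_one ht x
    _ = (lambda2 M + c) * ‖x‖ := by ring

theorem normalized_isHermitian {n : ℕ} {B : Matrix (Fin n) (Fin n) ℝ} (hB : B.IsHermitian) :
    (normalized B).IsHermitian := by
  have h := Matrix.isHermitian_mul_mul_conjTranspose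
    (Matrix.diagonal (fun i => (∑ j, B i j) ^ (-(1 : ℝ) / 2))) hB
  rwa [(Matrix.isHermitian_diagonal _).eq] at h

theorem normalized_apply {n : ℕ} (B : Matrix (Fin n) (Fin n) ℝ) (i j : Fin n) :
    normalized B i j =
      (∑ k, B i k) ^ (-(1 : ℝ) / 2) * B i j * (∑ k, B j k) ^ (-(1 : ℝ) / 2) := by
  rw [normalized, Matrix.mul_diagonal, Matrix.diagonal_mul]

theorem rpow_neg_half {a : ℝ} (ha : 0 ≤ a) : a ^ (-(1 : ℝ) / 2) = (√a)⁻¹ := by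
  rw [neg_div, Real.rpow_neg ha, Real.sqrt_eq_rpow]

/-- Regularization: for a connected simple graph on `n ≥ 2` vertices with adjacency matrix
`A`, minimum degree `δ ≥ 1`, maximum degree `Δ`, and `Δ/δ ≤ 8/7`, adding the diagonal matrix
`S` of weighted self-loops `S i i = Δ − deg(vᵢ)` makes all row sums of `A + S` equal to `Δ`,
and `λ₂` of the normalized version of `A + S` is at most `λ₂` of the normalized version of
`A`, plus `6/7`. -/
theorem lambda2_regularized_le {n : ℕ} (hn : 2 ≤ n)
    (G : SimpleGraph (Fin n)) [DecidableRel G.Adj] (hconn : G.Connected)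
    (hδ : 1 ≤ G.minDegree)
    (hratio : (G.maxDegree : ℝ) / (G.minDegree : ℝ) ≤ 8 / 7) :
    (∀ i, ∑ j, (G.adjMatrix ℝ +
        Matrix.diagonal fun v => (G.maxDegree : ℝ) - (G.degree v : ℝ)) i j =
      (G.maxDegree : ℝ)) ∧
    lambda2 (normalized (G.adjMatrix ℝ +
        Matrix.diagonal fun v => (G.maxDegree : ℝ) - (G.degree v : ℝ))) ≤
      lambda2 (normalized (G.adjMatrix ℝ)) + 6 / 7 := by
  have hsumA : ∀ i, ∑ j, G.adjMatrix ℝ i j = (G.degree i : ℝ) := by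
    intro i
    simp [SimpleGraph.adjMatrix_apply, Finset.sum_boole, ← SimpleGraph.card_neighborFinset_eq_degree,
      SimpleGraph.neighborFinset_eq_filter]
  have hsum : ∀ i, ∑ j, (G.adjMatrix ℝ +
        Matrix.diagonal fun v => (G.maxDegree : ℝ) - (G.degree v : ℝ)) i j =
      (G.maxDegree : ℝ) := by
    intro i
    simp only [Matrix.add_apply, Finset.sum_add_distrib, hsumA, Matrix.diagonal_apply,
      Finset.sum_ite_eq, Finset.mem_univ, if_true]
    ring
  refine ⟨hsum, ?_⟩
  have hδ' : (1 : ℝ) ≤ G.minDegree := by exact_mod_cast hδ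
  have hmin : ∀ i, (G.minDegree : ℝ) ≤ G.degree i := fun i => by
    exact_mod_cast G.minDegree_le_degree i
  have hmax : ∀ i, (G.degree i : ℝ) ≤ G.maxDegree := fun i => by
    exact_mod_cast G.degree_le_maxDegree i
  have hΔ : (G.maxDegree : ℝ) ≤ 8 / 7 * G.minDegree := by
    rwa [div_le_iff₀ (by linarith)] at hratio
  have hdpos : ∀ i, (0 : ℝ) < G.degree i := fun i => by linarith [hmin i]
  have hΔpos : (0 : ℝ) < G.maxDegree := by
    have i : Fin n := ⟨0, by omega⟩
    linarith [hmax i, hdpos i]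
  have hA : (G.adjMatrix ℝ).IsHermitian := by
    rw [Matrix.IsHermitian, Matrix.conjTranspose_eq_transpose_of_trivial]
    exact G.transpose_adjMatrix
  have hAS : (G.adjMatrix ℝ +
      Matrix.diagonal fun v => (G.maxDegree : ℝ) - (G.degree v : ℝ)).IsHermitian :=
    hA.add (Matrix.isHermitian_diagonal _)
  have key := lambda2_le_add hn (normalized_isHermitian hA) (normalized_isHermitian hAS)
    (t := fun i => √(G.degree i : ℝ) * (√(G.maxDegree : ℝ))⁻¹)
    (e := fun i => 1 - (G.degree i : ℝ) / G.maxDegree) (c := 1 / 8) (by norm_num) ?_ ?_ ?_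
  · linarith
  · intro i
    rw [abs_of_nonneg (by positivity), ← div_eq_mul_inv, div_le_one (Real.sqrt_pos.mpr hΔpos)]
    exact Real.sqrt_le_sqrt (hmax i)
  · intro i
    have h1 : (G.degree i : ℝ) / G.maxDegree ≤ 1 := (div_le_one hΔpos).mpr (hmax i)
    have h2 : 7 / 8 ≤ (G.degree i : ℝ) / G.maxDegree := by
      rw [le_div_iff₀ hΔpos]
      linarith [hmin i]
    rw [abs_of_nonneg (by linarith)]
    linarith
  · ext i j
    rw [normalized_apply, hsum, hsum, Matrix.add_apply, Matrix.add_apply, Matrix.mul_diagonal,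
      Matrix.diagonal_mul, normalized_apply, hsumA, hsumA, rpow_neg_half (hdpos i).le,
      rpow_neg_half (hdpos j).le, rpow_neg_half hΔpos.le]
    have hi := (Real.sqrt_pos.mpr (hdpos i)).ne'
    have hj := (Real.sqrt_pos.mpr (hdpos j)).ne'
    have hD := (Real.sqrt_pos.mpr hΔpos).ne'
    have hDsq : √(G.maxDegree : ℝ) ^ 2 = G.maxDegree := Real.sq_sqrt hΔpos.le
    have hoff : (√(G.maxDegree : ℝ))⁻¹ * G.adjMatrix ℝ i j * (√(G.maxDegree : ℝ))⁻¹ =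
        √(G.degree i : ℝ) * (√(G.maxDegree : ℝ))⁻¹ *
          ((√(G.degree i : ℝ))⁻¹ * G.adjMatrix ℝ i j * (√(G.degree j : ℝ))⁻¹) *
          (√(G.degree j : ℝ) * (√(G.maxDegree : ℝ))⁻¹) := by
      field_simp
    rw [mul_add, add_mul, hoff]
    congr 1
    rw [Matrix.diagonal_apply, Matrix.diagonal_apply]
    split_ifs with hij
    · have hinv : (√(G.maxDegree : ℝ))⁻¹ * (√(G.maxDegree : ℝ))⁻¹ = (G.maxDegree : ℝ)⁻¹ := by
        rw [← mul_inv, ← sq, hDsq]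
      rw [mul_right_comm, hinv, mul_sub, inv_mul_cancel₀ hΔpos.ne', inv_mul_eq_div]
    · simp
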